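/- For every real number c > 1 and every positive integer n, there exists a c-good map L_n : C_p(I) → C_p(Iⁿ), where I = [0,1]; in particular, L_n is a continuous linear surjection of C_p(I) onto C_p(Iⁿ) with ‖L_n‖ ≤ 1 such that every f ∈ C(Iⁿ) has a preimage g ∈ C(I) with ‖g‖ ≤ c·‖f‖. -/

import Mathlib

open Set Function

noncomputable section

/-- Topology of pointwise convergence on `C(X, ℝ)`. -/
def ptTop (X : Type*) [TopologicalSpace X] : TopologicalSpace C(X, ℝ) :=
  TopologicalSpace.induced (fun f => (f : X → ℝ)) Pi.topologicalSpace

/-- `X` ℓ-dominates `Y`: a continuous linear map of `C_p(X)` onto `C_p(Y)`. -/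
def LDominates (X Y : Type*) [TopologicalSpace X] [TopologicalSpace Y] : Prop :=
  ∃ L : C(X, ℝ) →ₗ[ℝ] C(Y, ℝ), @Continuous _ _ (ptTop X) (ptTop Y) L ∧ Surjective L

/-- Covering dimension at most `n`. -/
def CovDimLE (X : Type*) [TopologicalSpace X] (n : ℕ) : Prop :=
  ∀ (ι : Type) (U : ι → Set X), Finite ι → (∀ i, IsOpen (U i)) → (⋃ i, U i) = univ →
    ∃ V : ι → Set X, (∀ i, IsOpen (V i)) ∧ (∀ i, V i ⊆ U i) ∧ (⋃ i, V i) = univ ∧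
      ∀ x : X, {i | x ∈ V i}.ncard ≤ n + 1

/-- Finite (covering) dimensional space. -/
def FinDimSpace (X : Type*) [TopologicalSpace X] : Prop := ∃ n : ℕ, CovDimLE X n

/-- Strongly countable dimensional space. -/
def StronglyCountableDim (X : Type*) [TopologicalSpace X] : Prop :=
  ∃ F : ℕ → Set X, (∀ n, IsClosed (F n)) ∧ (∀ n, FinDimSpace ↥(F n)) ∧ (⋃ n, F n) = univ

/-- `I(S)` relative to a subset: points of `S` with a relatively open
finite dimensional neighbourhood in `S`. -/
def fdI (X : Type*) [TopologicalSpace X] (S : Set X) : Set X :=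
  {x | x ∈ S ∧ ∃ U : Set X, IsOpen U ∧ x ∈ U ∧ FinDimSpace ↥(U ∩ S)}

/-- The transfinite derived sets `K^[α]`. -/
def fdDerived (X : Type*) [TopologicalSpace X] : Ordinal → Set X := fun o =>
  Ordinal.limitRecOn o (univ : Set X)
    (fun _ S => S \ fdI X S)
    (fun o _ ih => ⋂ (o' : Ordinal) (h : o' < o), ih o' h)

/-- A k_ω sequence for `X`. -/
def IsKOmegaSeq (X : Type*) [TopologicalSpace X] (K : ℕ → Set X) : Prop :=
  (∀ n, IsCompact (K n)) ∧ (∀ n, K n ⊆ K (n + 1)) ∧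
  (∀ C : Set X, IsCompact C → ∃ n, C ⊆ K n) ∧
  (∀ A : Set X, (∀ n, ∃ F : Set X, IsClosed F ∧ A ∩ K n = F ∩ K n) → IsClosed A)

def KOmegaSpace (X : Type*) [TopologicalSpace X] : Prop := ∃ K : ℕ → Set X, IsKOmegaSeq X K

/-- Submetrizable: there is a coarser metrizable topology. -/
def Submetrizable (X : Type*) [TopologicalSpace X] : Prop :=
  ∃ t' : TopologicalSpace X, (∀ s : Set X, @IsOpen X t' s → IsOpen s) ∧
    @TopologicalSpace.MetrizableSpace X t'

def Hemicompact (X : Type*) [TopologicalSpace X] : Prop :=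
  ∃ K : ℕ → Set X, (∀ n, IsCompact (K n)) ∧ ∀ C : Set X, IsCompact C → ∃ n, C ⊆ K n

/-- `B` is (functionally) bounded in `X`. -/
def CBounded (X : Type*) [TopologicalSpace X] (B : Set X) : Prop :=
  ∀ f : C(X, ℝ), ∃ M : ℝ, ∀ x ∈ B, |f x| ≤ M

/-- μ-space: closed bounded subsets are compact. -/
def MuSpace (X : Type*) [TopologicalSpace X] : Prop :=
  ∀ B : Set X, IsClosed B → CBounded X B → IsCompact B

/-- `C(K; A)`: continuous functions vanishing on `A`, as a submodule. -/
def Czero (K : Type*) [TopologicalSpace K] (A : Set K) : Submodule ℝ C(K, ℝ) where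
  carrier := {f | ∀ x ∈ A, f x = 0}
  add_mem' := by intro f g hf hg x hx; simp [hf x hx, hg x hx]
  zero_mem' := by intro x hx; simp
  smul_mem' := by intro c f hf x hx; simp [hf x hx]

/-- Pointwise topology on `C(K;A)`. -/
def ptTopSub {K : Type*} [TopologicalSpace K] (A : Set K) :
    TopologicalSpace (Czero K A) :=
  TopologicalSpace.induced (fun f => (f : C(K, ℝ))) (ptTop K)

/-- `c`-good map between relative function spaces. -/
def IsCGood {K₁ K₂ : Type*} [TopologicalSpace K₁] [CompactSpace K₁]
    [TopologicalSpace K₂] [CompactSpace K₂] (A₁ : Set K₁) (A₂ : Set K₂) (c : ℝ)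
    (L : Czero K₁ A₁ →ₗ[ℝ] Czero K₂ A₂) : Prop :=
  @Continuous _ _ (ptTopSub A₁) (ptTopSub A₂) L ∧
  (∀ g : Czero K₁ A₁, ‖(L g : C(K₂, ℝ))‖ ≤ ‖(g : C(K₁, ℝ))‖) ∧
  (∀ f : Czero K₂ A₂, ∃ g : Czero K₁ A₁, L g = f ∧
    ‖(g : C(K₁, ℝ))‖ ≤ c * ‖(f : C(K₂, ℝ))‖)

/-- `c`-good map between full function spaces. -/
def IsCGoodMap {K₁ K₂ : Type*} [TopologicalSpace K₁] [CompactSpace K₁]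
    [TopologicalSpace K₂] [CompactSpace K₂] (c : ℝ)
    (L : C(K₁, ℝ) →ₗ[ℝ] C(K₂, ℝ)) : Prop :=
  @Continuous _ _ (ptTop K₁) (ptTop K₂) L ∧
  (∀ g : C(K₁, ℝ), ‖L g‖ ≤ ‖g‖) ∧
  (∀ f : C(K₂, ℝ), ∃ g : C(K₁, ℝ), L g = f ∧ ‖g‖ ≤ c * ‖f‖)

/-!
Take finitely many maps `Φ k : X → [0, 1]` and let `L g` be the average of the functions `g ∘ Φ k`.
Such an `L` is pointwise continuous and has norm at most `1`; a suitable choice of the `Φ k` makes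
it surjective with small kernel, as in Kahane's proof of Kolmogorov's superposition theorem.

Given `f : C(X, ℝ)`, choose for each of the `m` indices `k` a finite family of small disjoint closed
cells in `X`, in such a way that every point is missed by at most `n` of the families. A small
perturbation makes every `Φ k` constant on its cells, with different values on different cells
(over all `k`), and then some `g` with `‖g‖ ≤ ‖f‖` makes each `g ∘ Φ k` close to `f` on the cells
of `k`. So `L g` approximates `f` with relative error about `2 * n / m`. This is an open dense
condition on `Φ`, hence by Baire's theorem some `Φ` satisfies it for a dense sequence of functions
`f`, and successive approximation turns approximate preimages into exact ones.
-/

section SuccessiveApproximation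

variable {E F : Type*} [NormedAddCommGroup E] [NormedSpace ℝ E]
  [NormedAddCommGroup F] [NormedSpace ℝ F] (L : E →L[ℝ] F)

lemma exists_preimage_norm_le_of_approx [CompleteSpace E] {a b : ℝ} (ha : 0 ≤ a) (hb : 0 ≤ b)
    (hb1 : b < 1) (h : ∀ f, ∃ g, ‖g‖ ≤ a * ‖f‖ ∧ ‖f - L g‖ ≤ b * ‖f‖) (f : F) :
    ∃ g, L g = f ∧ ‖g‖ ≤ a / (1 - b) * ‖f‖ := by
  choose G hG hGL using h
  let r : ℕ → F := fun k => (fun f => f - L (G f))^[k] f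
  have hr : ∀ k, r (k + 1) = r k - L (G (r k)) := fun k => iterate_succ_apply' _ _ _
  have hr_norm : ∀ k, ‖r k‖ ≤ b ^ k * ‖f‖ := by
    intro k
    induction k with
    | zero => simp [r]
    | succ k ih =>
      calc ‖r (k + 1)‖ ≤ b * ‖r k‖ := hr k ▸ hGL (r k)
        _ ≤ b * (b ^ k * ‖f‖) := by gcongr
        _ = b ^ (k + 1) * ‖f‖ := by ring
  have hG_norm : ∀ k, ‖G (r k)‖ ≤ a * ‖f‖ * b ^ k := fun k =>
    calc ‖G (r k)‖ ≤ a * ‖r k‖ := hG (r k)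
      _ ≤ a * (b ^ k * ‖f‖) := by gcongr; exact hr_norm k
      _ = a * ‖f‖ * b ^ k := by ring
  have hgeom : HasSum (fun k => a * ‖f‖ * b ^ k) (a * ‖f‖ * (1 - b)⁻¹) :=
    (hasSum_geometric_of_lt_one hb hb1).mul_left _
  have hr_zero : Filter.Tendsto r Filter.atTop (nhds 0) :=
    squeeze_zero_norm hr_norm <| by
      simpa using (tendsto_pow_atTop_nhds_zero_of_lt_one hb hb1).mul_const ‖f‖
  have hpartial : ∀ N, ∑ k ∈ Finset.range N, L (G (r k)) = f - r N := fun N => by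
    simpa only [hr, sub_sub_cancel, r, iterate_zero_apply] using Finset.sum_range_sub' r N
  refine ⟨∑' k, G (r k), ?_, ?_⟩
  · have hLG := (L.hasSum (Summable.of_norm_bounded hgeom.summable hG_norm).hasSum).tendsto_sum_nat
    simp only [hpartial] at hLG
    exact tendsto_nhds_unique hLG (by simpa using hr_zero.const_sub f)
  · calc ‖∑' k, G (r k)‖ ≤ a * ‖f‖ * (1 - b)⁻¹ := tsum_of_norm_bounded hgeom hG_norm
      _ = a / (1 - b) * ‖f‖ := by rw [div_eq_mul_inv]; ring

lemma exists_approx_preimage_of_dense {D : Set F} (hD : Dense D) {θ a b : ℝ} (ha : 1 < a)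
    (hb : θ < b) (h : ∀ f ∈ D, ∃ g, ‖g‖ ≤ ‖f‖ ∧ ‖f - L g‖ ≤ θ * ‖f‖) (f : F) :
    ∃ g, ‖g‖ ≤ a * ‖f‖ ∧ ‖f - L g‖ ≤ b * ‖f‖ := by
  obtain rfl | hf := eq_or_ne f 0
  · exact ⟨0, by simp⟩
  have hf : 0 < ‖f‖ := norm_pos_iff.2 hf
  have hopen : IsOpen ({f' | ‖f'‖ < a * ‖f‖} ∩ {f' | ‖f - f'‖ + θ * ‖f'‖ < b * ‖f‖}) :=
    (isOpen_lt (by fun_prop) (by fun_prop)).inter (isOpen_lt (by fun_prop) (by fun_prop))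
  obtain ⟨f', ⟨hf'_norm, hf'⟩, hf'D⟩ := hD.inter_open_nonempty _ hopen
    ⟨f, lt_mul_of_one_lt_left hf ha, by simpa using mul_lt_mul_of_pos_right hb hf⟩
  obtain ⟨g, hg, hgL⟩ := h f' hf'D
  refine ⟨g, hg.trans (le_of_lt hf'_norm), ?_⟩
  calc ‖f - L g‖ ≤ ‖f - f'‖ + ‖f' - L g‖ := norm_sub_le_norm_sub_add_norm_sub _ _ _
    _ ≤ ‖f - f'‖ + θ * ‖f'‖ := by gcongr
    _ ≤ b * ‖f‖ := le_of_lt hf'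

end SuccessiveApproximation

section AverageComp

variable {X T κ : Type*} [TopologicalSpace X] [TopologicalSpace T] [Fintype κ]

/-- The operator sending `g` to the average of the functions `g ∘ Φ k`; all the `c`-good maps
constructed here are of this form. If there are no indices `k`, it is `0`. -/
def averageComp (Φ : κ → C(X, T)) : C(T, ℝ) →L[ℝ] C(X, ℝ) :=
  (Fintype.card κ : ℝ)⁻¹ • ∑ k, ContinuousMap.compCLM ℝ ℝ (Φ k)

lemma averageComp_apply (Φ : κ → C(X, T)) (g : C(T, ℝ)) :
    averageComp Φ g = (Fintype.card κ : ℝ)⁻¹ • ∑ k, g.comp (Φ k) := by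
  simp [averageComp]

lemma averageComp_apply_apply (Φ : κ → C(X, T)) (g : C(T, ℝ)) (x : X) :
    averageComp Φ g x = (Fintype.card κ : ℝ)⁻¹ * ∑ k, g (Φ k x) := by
  simp [averageComp_apply]

lemma continuous_averageComp_ptTop (Φ : κ → C(X, T)) :
    @Continuous _ _ (ptTop T) (ptTop X) (averageComp Φ) := by
  let := ptTop T
  have heval (t : T) : Continuous fun g : C(T, ℝ) => g t :=
    (continuous_apply t).comp continuous_induced_dom
  refine continuous_induced_rng.2 (continuous_pi fun x => ?_)
  simp only [comp_apply, averageComp_apply_apply]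
  exact continuous_const.mul (continuous_finsetSum _ fun k _ => heval (Φ k x))

lemma continuous_averageComp_left (g : C(T, ℝ)) :
    Continuous fun Φ : κ → C(X, T) => averageComp Φ g := by
  simp only [averageComp_apply]
  fun_prop

variable [CompactSpace X] [CompactSpace T]

lemma norm_averageComp_apply_le (Φ : κ → C(X, T)) (g : C(T, ℝ)) : ‖averageComp Φ g‖ ≤ ‖g‖ := by
  refine (ContinuousMap.norm_le _ (norm_nonneg g)).2 fun x => ?_
  calc ‖averageComp Φ g x‖ = (Fintype.card κ : ℝ)⁻¹ * ‖∑ k, g (Φ k x)‖ := by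
        simp [averageComp_apply_apply]
    _ ≤ (Fintype.card κ : ℝ)⁻¹ * ∑ _k : κ, ‖g‖ := by
        gcongr
        exact norm_sum_le_of_le _ fun k _ => g.norm_coe_le_norm _
    _ = (Fintype.card κ : ℝ)⁻¹ * Fintype.card κ * ‖g‖ := by simp [mul_assoc]
    _ ≤ ‖g‖ := mul_le_of_le_one_left (norm_nonneg g) inv_mul_le_one

lemma norm_sub_averageComp_le [Nonempty κ] {Φ : κ → C(X, T)} {f : C(X, ℝ)} {g : C(T, ℝ)} {δ : ℝ}
    {n : ℕ} (hg : ‖g‖ ≤ ‖f‖) (hδ : 0 ≤ δ)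
    (h : ∀ x, {k | δ < ‖f x - g (Φ k x)‖}.ncard ≤ n) :
    ‖f - averageComp Φ g‖ ≤ δ + 2 * n / Fintype.card κ * ‖f‖ := by
  classical
  refine (ContinuousMap.norm_le _ (by positivity)).2 fun x => ?_
  have hterm (k : κ) :
      ‖f x - g (Φ k x)‖ ≤ δ + if δ < ‖f x - g (Φ k x)‖ then 2 * ‖f‖ else 0 := by
    split_ifs with hk
    · linarith [norm_sub_le (f x) (g (Φ k x)), f.norm_coe_le_norm x, g.norm_coe_le_norm (Φ k x)]
    · simpa using hk
  have hcount : ((Finset.univ.filter fun k => δ < ‖f x - g (Φ k x)‖).card : ℝ) ≤ n := by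
    rw [← ncard_coe_finset, Finset.coe_filter_univ]
    exact_mod_cast h x
  have hdiff : (f - averageComp Φ g) x
      = (Fintype.card κ : ℝ)⁻¹ * ∑ k, (f x - g (Φ k x)) := by
    simp [averageComp_apply_apply, Finset.sum_sub_distrib, mul_sub]
  calc ‖(f - averageComp Φ g) x‖ = (Fintype.card κ : ℝ)⁻¹ * ‖∑ k, (f x - g (Φ k x))‖ := by
        simp [hdiff]
    _ ≤ (Fintype.card κ : ℝ)⁻¹ *
        ∑ k, (δ + if δ < ‖f x - g (Φ k x)‖ then 2 * ‖f‖ else 0) := by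
        gcongr
        exact norm_sum_le_of_le _ fun k _ => hterm k
    _ ≤ (Fintype.card κ : ℝ)⁻¹ * (Fintype.card κ * δ + n * (2 * ‖f‖)) := by
        rw [Finset.sum_add_distrib, ← Finset.sum_filter]
        simp only [Finset.sum_const, Finset.card_univ, nsmul_eq_mul]
        gcongr
    _ = δ + 2 * n / Fintype.card κ * ‖f‖ := by field_simp

lemma isOpen_setOf_exists_norm_sub_averageComp_lt (f : C(X, ℝ)) (M ε : ℝ) :
    IsOpen {Φ : κ → C(X, T) | ∃ g, ‖g‖ ≤ M ∧ ‖f - averageComp Φ g‖ < ε} := by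
  simp only [ofPred_exists, ofPred_and]
  exact isOpen_iUnion fun g => isOpen_const.inter
    (isOpen_lt (continuous_const.sub (continuous_averageComp_left g)).norm continuous_const)

end AverageComp

section Perturbation

lemma exists_injective_forall_mem_of_infinite {ι α : Type*} [Finite ι] {S : ι → Set α}
    (hS : ∀ i, (S i).Infinite) : ∃ v : ι → α, Injective v ∧ ∀ i, v i ∈ S i := by
  classical
  choose t htS ht using fun i => (hS i).exists_subset_card_eq (Nat.card ι)
  obtain ⟨v, hv, hvt⟩ := (Finset.all_card_le_biUnion_card_iff_exists_injective t).1 fun s => by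
    obtain rfl | ⟨i, hi⟩ := s.eq_empty_or_nonempty
    · simp
    calc s.card ≤ Nat.card ι := by
          have := Fintype.ofFinite ι
          simpa using s.card_le_univ
      _ = (t i).card := (ht i).symm
      _ ≤ (s.biUnion t).card := Finset.card_le_card (Finset.subset_biUnion_of_mem t hi)
  exact ⟨v, hv, fun i => htS i (hvt i)⟩

lemma exists_norm_le_forall_apply_eq {ι T : Type*} [Finite ι] [TopologicalSpace T] [CompactSpace T]
    [T2Space T] {v : ι → T} (hv : Injective v) {a : ι → ℝ} {M : ℝ} (hM : 0 ≤ M)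
    (ha : ∀ i, |a i| ≤ M) : ∃ g : C(T, ℝ), ‖g‖ ≤ M ∧ ∀ i, g (v i) = a i := by
  let : TopologicalSpace ι := ⊥
  have : DiscreteTopology ι := ⟨rfl⟩
  obtain ⟨g, hgM, hg⟩ := ContinuousMap.exists_extension_forall_mem_of_isClosedEmbedding
    ⟨a, continuous_of_discreteTopology⟩ (t := Icc (-M) M) (fun i => abs_le.1 (ha i))
    ⟨0, by simpa using hM⟩ (continuous_of_discreteTopology.isClosedEmbedding hv)
  exact ⟨g, (ContinuousMap.norm_le _ hM).2 fun t => abs_le.2 (hgM t), congrFun hg⟩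

variable {X ι : Type*} [TopologicalSpace X]

lemma exists_eqOn_forall_dist_le [NormalSpace X] {A : Set X} (hA : IsClosed A)
    (Φ : C(X, unitInterval)) {ψ : X → unitInterval} (hψ : ContinuousOn ψ A) {r : ℝ} (hr : 0 ≤ r)
    (hdist : ∀ x ∈ A, dist (ψ x) (Φ x) ≤ r) :
    ∃ Φ' : C(X, unitInterval), EqOn Φ' ψ A ∧ ∀ x, dist (Φ' x) (Φ x) ≤ r := by
  let d₀ : C(A, ℝ) := ⟨fun x => A.domRestrict ψ x - Φ x, by have := hψ.domRestrict; fun_prop⟩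
  obtain ⟨d, hdr, hd⟩ := d₀.exists_restrict_eq_forall_mem_of_closed (t := Icc (-r) r)
    (fun x => abs_le.1 (hdist x x.2)) ⟨0, by simpa using hr⟩ hA
  refine ⟨⟨fun x => projIcc 0 1 zero_le_one (Φ x + d x), by fun_prop⟩, fun x hx => ?_, fun x => ?_⟩
  · have hdx : d x = ψ x - Φ x := DFunLike.congr_fun hd ⟨x, hx⟩
    simp [hdx]
  · calc |(projIcc 0 1 zero_le_one (Φ x + d x) - Φ x : ℝ)|
        = |(projIcc 0 1 zero_le_one (Φ x + d x) - projIcc (0 : ℝ) 1 zero_le_one (Φ x) : ℝ)| := by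
          rw [projIcc_val]
      _ ≤ |Φ x + d x - Φ x| := abs_projIcc_sub_projIcc zero_le_one
      _ ≤ r := by rw [add_sub_cancel_left]; exact abs_le.2 (hdr x)

lemma exists_forall_mem_eq_forall_dist_le [NormalSpace X] [Finite ι] {C : ι → Set X}
    (hC : ∀ i, IsClosed (C i)) (hdisj : Pairwise (Disjoint on C)) (Φ : C(X, unitInterval))
    {v : ι → unitInterval} {r : ℝ} (hr : 0 ≤ r) (hv : ∀ i, ∀ x ∈ C i, dist (v i) (Φ x) ≤ r) :
    ∃ Φ' : C(X, unitInterval), (∀ i, ∀ x ∈ C i, Φ' x = v i) ∧ ∀ x, dist (Φ' x) (Φ x) ≤ r := by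
  classical
  let ψ : X → unitInterval := fun x => if hx : ∃ i, x ∈ C i then v hx.choose else 0
  have hψ : ∀ i, ∀ x ∈ C i, ψ x = v i := fun i x hx => by
    have hex : ∃ i, x ∈ C i := ⟨i, hx⟩
    rw [show ψ x = v hex.choose from dif_pos hex,
      hdisj.eq (not_disjoint_iff.2 ⟨x, hex.choose_spec, hx⟩)]
  have hψ_cont : ContinuousOn ψ (⋃ i, C i) := (locallyFinite_of_finite C).continuousOn_iUnion hC
    fun i => continuousOn_const.congr (hψ i)
  obtain ⟨Φ', hΦ'ψ, hΦ'⟩ := exists_eqOn_forall_dist_le (isClosed_iUnion_of_finite hC) Φ hψ_cont hr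
    fun x hx => by
      obtain ⟨i, hi⟩ := mem_iUnion.1 hx
      exact hψ i x hi ▸ hv i x hi
  exact ⟨Φ', fun i x hx => (hΦ'ψ (mem_iUnion_of_mem i hx)).trans (hψ i x hx), hΦ'⟩

lemma exists_perturbation_comp_eq [NormalSpace X] {κ : Type*} [Finite κ] [Finite ι]
    {C : κ → ι → Set X} (hC : ∀ k i, IsClosed (C k i)) (hdisj : ∀ k, Pairwise (Disjoint on C k))
    (Φ : κ → C(X, unitInterval)) {w : κ → ι → unitInterval} {r : ℝ} (hr : 0 < r)
    (hw : ∀ k i, ∀ x ∈ C k i, dist (w k i) (Φ k x) ≤ r) {a : κ → ι → ℝ} {M : ℝ} (hM : 0 ≤ M)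
    (ha : ∀ k i, |a k i| ≤ M) :
    ∃ (Φ' : κ → C(X, unitInterval)) (g : C(unitInterval, ℝ)),
      (∀ k x, dist (Φ' k x) (Φ k x) ≤ 2 * r) ∧ ‖g‖ ≤ M ∧
        ∀ k i, ∀ x ∈ C k i, g (Φ' k x) = a k i := by
  obtain ⟨v, hv_inj, hv⟩ := exists_injective_forall_mem_of_infinite fun p : κ × ι =>
    infinite_of_mem_nhds (w p.1 p.2) (Metric.ball_mem_nhds _ hr)
  have hvΦ : ∀ k i, ∀ x ∈ C k i, dist (v (k, i)) (Φ k x) ≤ 2 * r := fun k i x hx =>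
    calc dist (v (k, i)) (Φ k x) ≤ dist (v (k, i)) (w k i) + dist (w k i) (Φ k x) :=
          dist_triangle _ _ _
      _ ≤ r + r := add_le_add (Metric.mem_ball.1 (hv (k, i))).le (hw k i x hx)
      _ = 2 * r := (two_mul r).symm
  choose Φ' hΦ'v hΦ' using fun k =>
    exists_forall_mem_eq_forall_dist_le (hC k) (hdisj k) (Φ k) (by positivity) (hvΦ k)
  obtain ⟨g, hgM, hg⟩ := exists_norm_le_forall_apply_eq hv_inj hM fun p : κ × ι => ha p.1 p.2
  exact ⟨Φ', g, hΦ', hgM, fun k i x hx => by rw [hΦ'v k i x hx, hg]⟩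

end Perturbation

section OstrandDim

/-- Ostrand's form of the assertion that a compact metric space has dimension at most `n`: for
every `m` and every mesh `η` there are `m` finite families of cells, each consisting of pairwise
disjoint closed sets, such that each point is missed by at most `n` of the families. -/
def OstrandDimLE (X : Type*) [PseudoMetricSpace X] (n : ℕ) : Prop :=
  ∀ (m : ℕ) (η : ℝ), 0 < η → ∃ (ι : Type) (_ : Finite ι) (C : Fin m → ι → Set X),
    (∀ k i, IsClosed (C k i)) ∧ (∀ k, Pairwise (Disjoint on C k)) ∧
    (∀ k i, ∀ x ∈ C k i, ∀ y ∈ C k i, dist x y < η) ∧ ∀ x, {k | ∀ i, x ∉ C k i}.ncard ≤ n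

lemma OstrandDimLE.pi {σ : Type} [Fintype σ] {X : σ → Type*} [∀ j, PseudoMetricSpace (X j)]
    {n : σ → ℕ} (h : ∀ j, OstrandDimLE (X j) (n j)) : OstrandDimLE (∀ j, X j) (∑ j, n j) := by
  intro m η hη
  choose ι hι C hC hdisj hdiam hmiss using fun j => h j m η hη
  refine ⟨∀ j, ι j, inferInstance, fun k i => univ.pi fun j => C j k (i j), fun k i => ?_,
    fun k i i' hii' => ?_, fun k i x hx y hy => ?_, fun x => ?_⟩
  · exact isClosed_set_pi fun j _ => hC j k (i j)
  · obtain ⟨j, hj⟩ := ne_iff.1 hii'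
    exact Disjoint.set_pi (mem_univ j) (hdisj j k hj)
  · exact (dist_pi_lt_iff hη).2 fun j => hdiam j k (i j) _ (hx j trivial) _ (hy j trivial)
  · have hsub : {k | ∀ i : ∀ j, ι j, x ∉ univ.pi fun j => C j k (i j)} ⊆
        ⋃ j, {k | ∀ i, x j ∉ C j k i} := by
      intro k hk
      by_contra hcover
      simp only [mem_iUnion, mem_ofPred_eq, not_exists, not_forall, not_not] at hcover
      choose i hi using hcover
      exact hk i fun j _ => hi j
    calc _ ≤ (⋃ j, {k | ∀ i, x j ∉ C j k i}).ncard := ncard_le_ncard hsub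
      _ ≤ ∑ j, {k | ∀ i, x j ∉ C j k i}.ncard := ncard_iUnion_le_of_fintype _
      _ ≤ ∑ j, n j := Finset.sum_le_sum fun j _ => hmiss j (x j)

/-- The `q`-th cell of the `k`-th of `m` families subdividing `[0, 1]` at scale `1 / N`. The `k`-th
subdivision is shifted by `k / (m * N)`, and its consecutive cells are separated by gaps of length
`1 / (m * N)`. Multiplying by `m * N` clears all denominators. -/
def shiftedCell (m N k q : ℕ) : Set unitInterval :=
  {t | (m * N * t + k : ℝ) ∈ Icc (m * q + 1 / 2 : ℝ) (m * (q + 1) - 1 / 2)}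

lemma isClosed_shiftedCell (m N k q : ℕ) : IsClosed (shiftedCell m N k q) :=
  isClosed_Icc.preimage (by fun_prop)

lemma pairwise_disjoint_shiftedCell (m N k : ℕ) : Pairwise (Disjoint on shiftedCell m N k) := by
  refine (pairwise_disjoint_on _).2 fun q q' hqq' => disjoint_left.2 fun t ht ht' => ?_
  have : (m * (q + 1) : ℝ) ≤ m * q' := by gcongr; exact_mod_cast hqq'
  linarith [ht.2, ht'.1]

lemma dist_lt_inv_of_mem_shiftedCell {m N k q : ℕ} (hm : 0 < m) (hN : 0 < N) {s t : unitInterval}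
    (hs : s ∈ shiftedCell m N k q) (ht : t ∈ shiftedCell m N k q) : dist s t < (N : ℝ)⁻¹ := by
  have hscaled : m * N * |(s - t : ℝ)| < m := by
    rw [← abs_of_nonneg (by positivity : (0 : ℝ) ≤ m * N), ← abs_mul, abs_lt]
    constructor <;> linarith [hs.1, hs.2, ht.1, ht.2]
  rw [← one_div, lt_div_iff₀ (by positivity)]
  change |(s - t : ℝ)| * N < 1
  exact lt_of_mul_lt_mul_left (by linarith) (Nat.cast_nonneg (α := ℝ) m)

/-- The gaps of the `k`-th subdivision, scaled by `m * N`, are centred at the integers congruent to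
`-k` modulo `m`. -/
lemma exists_mem_shiftedCell_of_not_dvd {m N k : ℕ} (hk : k < m) {t : unitInterval}
    (h : ¬ m ∣ ⌊(m * N * t + 1 / 2 : ℝ)⌋₊ + k) : ∃ q < N + 1, t ∈ shiftedCell m N k q := by
  set p := ⌊(m * N * t + 1 / 2 : ℝ)⌋₊
  have ht₀ : (0 : ℝ) ≤ m * N * t := mul_nonneg (by positivity) t.2.1
  have ht₁ : (m * N * t : ℝ) ≤ m * N := mul_le_of_le_one_right (by positivity) t.2.2
  have hp_le : (p : ℝ) ≤ m * N * t + 1 / 2 := Nat.floor_le (by positivity)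
  have lt_hp : (m * N * t + 1 / 2 : ℝ) < p + 1 := Nat.lt_floor_add_one _
  have hpN : p ≤ m * N := by
    have : (p : ℝ) < (m * N + 1 : ℕ) := by push_cast; linarith
    exact Nat.lt_succ_iff.1 (by exact_mod_cast this)
  have hrem_pos : 1 ≤ (p + k) % m :=
    Nat.one_le_iff_ne_zero.2 fun h0 => h (Nat.dvd_of_mod_eq_zero h0)
  have hrem_lt : (p + k) % m + 1 ≤ m := Nat.mod_lt _ (by omega)
  have hdiv : (m * ((p + k) / m : ℕ) + ((p + k) % m : ℕ) : ℝ) = p + k := by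
    exact_mod_cast Nat.div_add_mod (p + k) m
  have hrem_pos' : (1 : ℝ) ≤ ((p + k) % m : ℕ) := by exact_mod_cast hrem_pos
  have hrem_lt' : (((p + k) % m : ℕ) + 1 : ℝ) ≤ m := by exact_mod_cast hrem_lt
  refine ⟨(p + k) / m, Nat.div_lt_of_lt_mul (by rw [mul_add_one]; omega), ?_, ?_⟩ <;> linarith

lemma ostrandDimLE_unitInterval : OstrandDimLE unitInterval 1 := by
  intro m η hη
  obtain ⟨N, hN⟩ := exists_nat_gt η⁻¹
  have hN₀ : (0 : ℝ) < N := (inv_pos.2 hη).trans hN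
  refine ⟨Fin (N + 1), inferInstance, fun k q => shiftedCell m N k q,
    fun k q => isClosed_shiftedCell _ _ _ _, fun k q q' hqq' => ?_, fun k q s hs t ht => ?_,
    fun t => (ncard_le_one).2 fun k hk l hl => ?_⟩
  · exact pairwise_disjoint_shiftedCell m N k (Fin.val_injective.ne hqq')
  · exact (dist_lt_inv_of_mem_shiftedCell k.pos (by exact_mod_cast hN₀) hs ht).trans
      (inv_lt_of_inv_lt₀ hη hN)
  · have hdvd : ∀ k : Fin m, (∀ q : Fin (N + 1), t ∉ shiftedCell m N k q) →
        m ∣ ⌊(m * N * t + 1 / 2 : ℝ)⌋₊ + k := fun k hk => by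
      by_contra hndvd
      obtain ⟨q, hqN, hq⟩ := exists_mem_shiftedCell_of_not_dvd k.2 hndvd
      exact hk ⟨q, hqN⟩ hq
    have hmod : (k : ℕ) ≡ l [MOD m] := Nat.ModEq.add_left_cancel' _
      (((hdvd k hk).modEq_zero_nat).trans (hdvd l hl).modEq_zero_nat.symm)
    exact Fin.ext (hmod.eq_of_lt_of_lt k.2 l.2)

lemma ostrandDimLE_cube (n : ℕ) : OstrandDimLE (Fin n → unitInterval) n := by
  simpa using OstrandDimLE.pi fun _ : Fin n => ostrandDimLE_unitInterval

end OstrandDim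

section Baire

variable {X : Type*} [PseudoMetricSpace X] [CompactSpace X] {m n : ℕ}

lemma OstrandDimLE.exists_norm_le_norm_sub_averageComp_le (hX : OstrandDimLE X n) [NeZero m]
    (Φ : Fin m → C(X, unitInterval)) {r δ : ℝ} (hr : 0 < r) (hδ : 0 < δ) (f : C(X, ℝ)) :
    ∃ (Φ' : Fin m → C(X, unitInterval)) (g : C(unitInterval, ℝ)), dist Φ' Φ ≤ r ∧ ‖g‖ ≤ ‖f‖ ∧
      ‖f - averageComp Φ' g‖ ≤ δ + 2 * n / m * ‖f‖ := by
  obtain ⟨η, hη, hηf⟩ := f.uniform_continuity δ hδ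
  obtain ⟨η', hη', hηΦ⟩ := (ContinuousMap.pi Φ).uniform_continuity (r / 2) (half_pos hr)
  obtain ⟨ι, _, C, hC, hdisj, hdiam, hmiss⟩ := hX m (min η η') (lt_min hη hη')
  have hvalues : ∀ k i, ∃ (w : unitInterval) (a : ℝ), |a| ≤ ‖f‖ ∧
      ∀ x ∈ C k i, dist w (Φ k x) ≤ r / 2 ∧ dist (f x) a ≤ δ := fun k i => by
    obtain hempty | ⟨y, hy⟩ := (C k i).eq_empty_or_nonempty
    · exact ⟨0, 0, by simp [hempty]⟩
    refine ⟨Φ k y, f y, f.norm_coe_le_norm y, fun x hx => ⟨?_, ?_⟩⟩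
    · have := hηΦ ((hdiam k i y hy x hx).trans_le (min_le_right _ _))
      exact ((dist_pi_lt_iff (half_pos hr)).1 this k).le
    · exact (hηf ((hdiam k i x hx y hy).trans_le (min_le_left _ _))).le
  choose w a ha hwa using hvalues
  obtain ⟨Φ', g, hΦ', hgf, hg⟩ := exists_perturbation_comp_eq hC hdisj Φ (half_pos hr)
    (fun k i x hx => (hwa k i x hx).1) (norm_nonneg f) ha
  refine ⟨Φ', g, (dist_pi_le_iff hr.le).2 fun k => (ContinuousMap.dist_le hr.le).2 fun x => ?_,
    hgf, ?_⟩
  · simpa [mul_div_cancel₀] using hΦ' k x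
  · have hfar : ∀ x, {k | δ < ‖f x - g (Φ' k x)‖} ⊆ {k | ∀ i, x ∉ C k i} :=
      fun x k hk i hx => hk.not_ge (hg k i x hx ▸ (hwa k i x hx).2)
    simpa using norm_sub_averageComp_le hgf hδ.le fun x => (ncard_le_ncard (hfar x)).trans (hmiss x)

lemma OstrandDimLE.dense_setOf_exists_norm_sub_averageComp_lt (hX : OstrandDimLE X n) [NeZero m]
    (f : C(X, ℝ)) {ε : ℝ} (hε : 2 * n / m * ‖f‖ < ε) :
    Dense {Φ : Fin m → C(X, unitInterval) | ∃ g, ‖g‖ ≤ ‖f‖ ∧ ‖f - averageComp Φ g‖ < ε} := by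
  refine Metric.dense_iff.2 fun Φ r hr => ?_
  obtain ⟨δ, hδ, hδε⟩ := exists_between (sub_pos.2 hε)
  obtain ⟨Φ', g, hΦ', hgf, hg⟩ :=
    hX.exists_norm_le_norm_sub_averageComp_le Φ (half_pos hr) hδ f
  exact ⟨Φ', hΦ'.trans_lt (half_lt_self hr), g, hgf, hg.trans_lt (by linarith)⟩

lemma OstrandDimLE.exists_forall_mem_norm_sub_averageComp_le (hX : OstrandDimLE X n) [NeZero m]
    {θ : ℝ} (hθ : 2 * n / m < θ) {D : Set C(X, ℝ)} (hD : D.Countable) :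
    ∃ Φ : Fin m → C(X, unitInterval),
      ∀ f ∈ D, ∃ g, ‖g‖ ≤ ‖f‖ ∧ ‖f - averageComp Φ g‖ ≤ θ * ‖f‖ := by
  obtain ⟨Φ, hΦ⟩ := (dense_biInter_of_isOpen
    (fun f _ => isOpen_setOf_exists_norm_sub_averageComp_lt f ‖f‖ (θ * ‖f‖))
    (hD.mono (sdiff_subset (t := {0})))
    (fun f hf => hX.dense_setOf_exists_norm_sub_averageComp_lt (m := m) f
      (mul_lt_mul_of_pos_right hθ (norm_pos_iff.2 hf.2)))).nonempty
  refine ⟨Φ, fun f hf => ?_⟩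
  obtain rfl | hf₀ := eq_or_ne f 0
  · exact ⟨0, by simp⟩
  obtain ⟨g, hgf, hg⟩ := mem_iInter₂.1 hΦ f ⟨hf, hf₀⟩
  exact ⟨g, hgf, hg.le⟩

end Baire

theorem exists_cGood_unitInterval_to_cube_general {X : Type*} [PseudoMetricSpace X]
    [CompactSpace X] {n : ℕ} (hX : OstrandDimLE X n) {c : ℝ} (hc : 1 < c) :
    ∃ L : C(unitInterval, ℝ) →ₗ[ℝ] C(X, ℝ), IsCGoodMap c L ∧ Surjective L := by
  obtain ⟨a, ha, hac⟩ := exists_between hc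
  have hc₀ : 0 < c := one_pos.trans hc
  have hb : 0 < 1 - a / c := sub_pos.2 ((div_lt_one hc₀).2 hac)
  obtain ⟨θ, hθ, hθb⟩ := exists_between hb
  obtain ⟨m, hm⟩ := exists_nat_gt (2 * n / θ)
  have hm₀ : (0 : ℝ) < m := hm.trans_le' (by positivity)
  have : NeZero m := ⟨by rintro rfl; simp at hm₀⟩
  obtain ⟨D, hD_countable, hD⟩ := TopologicalSpace.exists_countable_dense C(X, ℝ)
  obtain ⟨Φ, hΦ⟩ := hX.exists_forall_mem_norm_sub_averageComp_le
    (div_lt_comm₀ hm₀ hθ |>.2 hm) hD_countable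
  have hsolve : ∀ f, ∃ g, averageComp Φ g = f ∧ ‖g‖ ≤ c * ‖f‖ := by
    have hac' : a / (1 - (1 - a / c)) = c := by
      rw [sub_sub_cancel, div_div_cancel₀ (by positivity)]
    simpa only [hac'] using exists_preimage_norm_le_of_approx _ (by positivity) hb.le
      (sub_lt_self 1 (by positivity)) (exists_approx_preimage_of_dense _ hD ha hθb hΦ)
  exact ⟨averageComp Φ, ⟨continuous_averageComp_ptTop Φ, norm_averageComp_apply_le Φ, hsolve⟩,
    fun f => (hsolve f).imp fun _ => And.left⟩

/-- for each `c > 1` and `n ≥ 1` there is a c-good (in particular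
continuous linear surjective, norm ≤ 1, small-kernel) map of `C_p(I)` onto `C_p(Iⁿ)`. -/
theorem exists_cGood_unitInterval_to_cube (c : ℝ) (hc : 1 < c) (n : ℕ) (hn : 0 < n) :
    ∃ L : C(unitInterval, ℝ) →ₗ[ℝ] C(Fin n → unitInterval, ℝ),
      IsCGoodMap c L ∧ Surjective L := by
  exact exists_cGood_unitInterval_to_cube_general (ostrandDimLE_cube n) hc

end
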